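/- For i = 1,…,n, let Vᵢ be an mᵢ×mᵢ real symmetric positive definite matrix, Wᵢ an mᵢ×mᵢ real symmetric positive semidefinite matrix, and Λᵢ an mᵢ×q real matrix. Suppose H := Σᵢ ΛᵢᵀWᵢΛᵢ and Ω* := Σᵢ ΛᵢᵀVᵢ⁻¹Λᵢ are invertible. Then H⁻¹ (Σᵢ ΛᵢᵀWᵢVᵢWᵢΛᵢ) H⁻¹ − Ω*⁻¹ is positive semidefinite. -/

import Mathlib

open Matrix

/-!
Each matrix `[AᴴVA, AᴴB; BᴴA, BᴴV⁻¹B]` is positive semidefinite, being the Gram matrix of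
`[A, V⁻¹B]` for the form `V`. Summing over `i` and taking a Schur complement gives a matrix
Cauchy–Schwarz inequality; for `A = WΛ` and `B = Λ` it reads `Σ ΛᴴWᴴVWΛ ≥ Hᴴ Ω*⁻¹ H`, and
conjugation by `H⁻¹` is the claim.
-/

theorem sum_fromBlocks {ι l m n o R : Type*} [AddCommMonoid R] (s : Finset ι)
    (A : ι → Matrix n l R) (B : ι → Matrix n m R) (C : ι → Matrix o l R)
    (D : ι → Matrix o m R) :
    ∑ i ∈ s, fromBlocks (A i) (B i) (C i) (D i) =
      fromBlocks (∑ i ∈ s, A i) (∑ i ∈ s, B i) (∑ i ∈ s, C i) (∑ i ∈ s, D i) := by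
  ext (i | i) (j | j) <;> simp [Matrix.sum_apply]

theorem posDef_sum_conjTranspose_mul_mul_same {ι q R : Type*} [Ring R] [PartialOrder R]
    [StarRing R] [StarOrderedRing R] [Fintype ι] [Fintype q] {m : ι → Type*} [∀ i, Fintype (m i)]
    {V : ∀ i, Matrix (m i) (m i) R} (hV : ∀ i, (V i).PosDef) {B : ∀ i, Matrix (m i) q R}
    (hB : ∀ x, (∀ i, B i *ᵥ x = 0) → x = 0) :
    (∑ i, (B i)ᴴ * V i * B i).PosDef := by
  have hsemidef : ∀ i, ((B i)ᴴ * V i * B i).PosSemidef := fun i =>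
    (hV i).posSemidef.conjTranspose_mul_mul_same (B i)
  refine .of_dotProduct_mulVec_pos (posSemidef_sum _ fun i _ => hsemidef i).isHermitian
    fun x hx => ?_
  obtain ⟨j, hj⟩ : ∃ j, B j *ᵥ x ≠ 0 := by
    by_contra! hzero
    exact hx (hB x hzero)
  have hpos : 0 < star x ⬝ᵥ (((B j)ᴴ * V j * B j) *ᵥ x) := by
    simpa only [star_mulVec, dotProduct_mulVec, vecMul_vecMul, Matrix.mul_assoc] using
      (hV j).dotProduct_mulVec_pos hj
  rw [sum_mulVec, dotProduct_sum]
  exact Finset.sum_pos' (fun i _ => (hsemidef i).dotProduct_mulVec_nonneg x)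
    ⟨j, Finset.mem_univ j, hpos⟩

section

variable {K p q : Type*} [Field K] [PartialOrder K] [StarRing K]

theorem posSemidef_fromBlocks_conjTranspose_mul_mul_inv {m : Type*} [Fintype m] [DecidableEq m]
    [Finite p] [Finite q] {V : Matrix m m K} (hV : V.PosDef) (A : Matrix m p K) (B : Matrix m q K) :
    (fromBlocks (Aᴴ * V * A) (Aᴴ * B) (Bᴴ * A) (Bᴴ * V⁻¹ * B)).PosSemidef := by
  have hdet : IsUnit V.det := (isUnit_iff_isUnit_det V).mp hV.isUnit
  have gram : fromBlocks (Aᴴ * V * A) (Aᴴ * B) (Bᴴ * A) (Bᴴ * V⁻¹ * B) =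
      (fromCols A (V⁻¹ * B))ᴴ * V * fromCols A (V⁻¹ * B) := by
    rw [conjTranspose_fromCols_eq_fromRows_conjTranspose, fromRows_mul, fromRows_mul_fromCols]
    simp only [conjTranspose_mul, hV.inv.isHermitian.eq, Matrix.mul_assoc,
      mul_nonsing_inv_cancel_left _ _ hdet, nonsing_inv_mul_cancel_left _ _ hdet]
  rw [gram]
  cases nonempty_fintype p
  cases nonempty_fintype q
  exact hV.posSemidef.conjTranspose_mul_mul_same _

variable [StarOrderedRing K] [Fintype q] {ι : Type*} [Fintype ι] {m : ι → Type*}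
  [∀ i, Fintype (m i)] [∀ i, DecidableEq (m i)] [DecidableEq q] {V : ∀ i, Matrix (m i) (m i) K}

theorem posSemidef_sum_sub_mul_inv_mul [Finite p] (hV : ∀ i, (V i).PosDef)
    (A : ∀ i, Matrix (m i) p K) {B : ∀ i, Matrix (m i) q K}
    (hB : ∀ x, (∀ i, B i *ᵥ x = 0) → x = 0) :
    (∑ i, (A i)ᴴ * V i * A i -
      (∑ i, (A i)ᴴ * B i) * (∑ i, (B i)ᴴ * (V i)⁻¹ * B i)⁻¹ *
        (∑ i, (A i)ᴴ * B i)ᴴ).PosSemidef := by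
  have hΩ : (∑ i, (B i)ᴴ * (V i)⁻¹ * B i).PosDef :=
    posDef_sum_conjTranspose_mul_mul_same (fun i => (hV i).inv) hB
  cases nonempty_fintype p
  let := hΩ.isUnit.invertible
  rw [← hΩ.fromBlocks₂₂]
  have hblocks := posSemidef_sum Finset.univ fun i _ =>
    posSemidef_fromBlocks_conjTranspose_mul_mul_inv (hV i) (A i) (B i)
  simpa only [sum_fromBlocks, conjTranspose_sum, conjTranspose_mul,
    conjTranspose_conjTranspose] using hblocks

theorem stmt5_general (hV : ∀ i, (V i).PosDef) (W : ∀ i, Matrix (m i) (m i) K)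
    (Λ : ∀ i, Matrix (m i) q K) (hH : IsUnit (∑ i, (Λ i)ᴴ * W i * Λ i).det) :
    ((∑ i, (Λ i)ᴴ * W i * Λ i)⁻¹ᴴ * (∑ i, (Λ i)ᴴ * (W i)ᴴ * V i * W i * Λ i) *
        (∑ i, (Λ i)ᴴ * W i * Λ i)⁻¹ -
      (∑ i, (Λ i)ᴴ * (V i)⁻¹ * Λ i)⁻¹).PosSemidef := by
  set H := ∑ i, (Λ i)ᴴ * W i * Λ i with hHdef
  have hΛ : ∀ x, (∀ i, Λ i *ᵥ x = 0) → x = 0 := fun x hx => by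
    refine mulVec_injective_of_isUnit ((isUnit_iff_isUnit_det H).mpr hH) ?_
    simp only [hHdef, sum_mulVec, ← mulVec_mulVec, hx, mulVec_zero, Finset.sum_const_zero]
  have hcross : ∑ i, (W i * Λ i)ᴴ * Λ i = Hᴴ := by
    simp only [hHdef, conjTranspose_sum, conjTranspose_mul, conjTranspose_conjTranspose,
      Matrix.mul_assoc]
  have hmiddle : ∑ i, (W i * Λ i)ᴴ * V i * (W i * Λ i) =
      ∑ i, (Λ i)ᴴ * (W i)ᴴ * V i * W i * Λ i := by
    simp only [conjTranspose_mul, Matrix.mul_assoc]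
  have hcancel : H⁻¹ᴴ * Hᴴ = 1 := by
    rw [← conjTranspose_mul, mul_nonsing_inv _ hH, conjTranspose_one]
  have hcauchySchwarz := posSemidef_sum_sub_mul_inv_mul hV (fun i => W i * Λ i) hΛ
  rw [hcross, hmiddle, conjTranspose_conjTranspose] at hcauchySchwarz
  have hconj := hcauchySchwarz.conjTranspose_mul_mul_same H⁻¹
  rwa [Matrix.mul_sub, Matrix.sub_mul, Matrix.mul_assoc Hᴴ, ← Matrix.mul_assoc H⁻¹ᴴ Hᴴ, hcancel,
    Matrix.one_mul, mul_nonsing_inv_cancel_right _ _ hH] at hconj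

end

/-- General weighted efficiency comparison: for any symmetric PSD weights `Wᵢ`,
the sandwich covariance `H⁻¹(Σ ΛᵢᵀWᵢVᵢWᵢΛᵢ)H⁻¹` with `H = Σ ΛᵢᵀWᵢΛᵢ`
dominates `Ω*⁻¹ = (Σ ΛᵢᵀVᵢ⁻¹Λᵢ)⁻¹` in the positive semidefinite order. -/
theorem stmt5 {n q : ℕ} (m : Fin n → ℕ)
    (V W : ∀ i, Matrix (Fin (m i)) (Fin (m i)) ℝ)
    (Λ : ∀ i, Matrix (Fin (m i)) (Fin q) ℝ)
    (hV : ∀ i, (V i).PosDef)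
    (hW : ∀ i, (W i).PosSemidef)
    (hH : IsUnit (∑ i, (Λ i)ᵀ * W i * Λ i).det)
    (hΩstar : IsUnit (∑ i, (Λ i)ᵀ * (V i)⁻¹ * Λ i).det) :
    ((∑ i, (Λ i)ᵀ * W i * Λ i)⁻¹ * (∑ i, (Λ i)ᵀ * W i * V i * W i * Λ i) *
        (∑ i, (Λ i)ᵀ * W i * Λ i)⁻¹ -
      (∑ i, (Λ i)ᵀ * (V i)⁻¹ * Λ i)⁻¹).PosSemidef := by
  simpa [conjTranspose_nonsing_inv, conjTranspose_sum, (hW _).isHermitian.eq,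
    ← conjTranspose_eq_transpose_of_trivial, Matrix.mul_assoc] using stmt5_general hV W Λ hH
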